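/- In the path-constrained railway transition system, assume the terminal capacity condition: for every node n, the number of trains i whose path terminates at n (i.e., p_i (L_i) = n) is strictly less than c n. Suppose a safe configuration s is reachable from a configuration k₀. Then for every configuration k' such that k' is reachable from k₀ and s is reachable from k', the terminal configuration is reachable from k'. (Recursive feasibility: operating the system along any schedule that ends in a safe state never drives the system into a deadlock; from every intermediate state, all trains can still reach their destinations.) -/

import Mathlib

/-- A *single move*: one train `i` advances one step along its path, the
destination node having a free slot not counting train `i`. -/
def Move {I N : Type*} [Fintype I] [DecidableEq I] [DecidableEq N]
    (c : N → ℕ) (L : I → ℕ) (p : ∀ i : I, Fin (L i + 1) → N)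
    (k k' : ∀ i : I, Fin (L i + 1)) : Prop :=
  ∃ (i : I) (h : (k i : ℕ) < L i),
    k' i = ⟨(k i : ℕ) + 1, Nat.succ_lt_succ h⟩ ∧
    (∀ j : I, j ≠ i → k' j = k j) ∧
    (Finset.univ.filter (fun j : I =>
        j ≠ i ∧ p j (k j) = p i ⟨(k i : ℕ) + 1, Nat.succ_lt_succ h⟩)).card
      < c (p i ⟨(k i : ℕ) + 1, Nat.succ_lt_succ h⟩)

/-- Reachability: reflexive–transitive closure of the single-move relation. -/
def Reachable {I N : Type*} [Fintype I] [DecidableEq I] [DecidableEq N]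
    (c : N → ℕ) (L : I → ℕ) (p : ∀ i : I, Fin (L i + 1) → N)
    (k k' : ∀ i : I, Fin (L i + 1)) : Prop :=
  Relation.ReflTransGen (Move c L p) k k'

/-- A configuration is *safe* if every node has a strictly free slot. -/
def SafeConfig {I N : Type*} [Fintype I] [DecidableEq I] [DecidableEq N]
    (c : N → ℕ) (L : I → ℕ) (p : ∀ i : I, Fin (L i + 1) → N)
    (k : ∀ i : I, Fin (L i + 1)) : Prop :=
  ∀ n : N, (Finset.univ.filter (fun i : I => p i (k i) = n)).card < c n

/-!
Call a configuration safe except for train `j` if every node has a free slot once `j` is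
disregarded. In such a configuration `j` may always advance, and the resulting configuration is
again safe except for `j`. Suppose `j` has already arrived but other trains have not. If an
unfinished train stands at the same node as `j`, the configuration is safe except for that train as
well. Otherwise only finished trains stand there, so the terminal capacity condition leaves a slot
free at that node, the whole configuration is safe, and any unfinished train may advance. Hence
the system never gets stuck before the terminal configuration, and since every move strictly
increases the configuration in the finite product order, it gets there.
-/

section

variable {I N : Type*} [Fintype I] [DecidableEq N]

/-- The trains standing at node `n` in configuration `k`. -/
def trainsAt {L : I → ℕ} (p : ∀ i : I, Fin (L i + 1) → N) (k : ∀ i : I, Fin (L i + 1)) (n : N) :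
    Finset I :=
  {i | p i (k i) = n}

variable {c : N → ℕ} {L : I → ℕ} {p : ∀ i : I, Fin (L i + 1) → N} {k k' : ∀ i : I, Fin (L i + 1)}

@[simp]
lemma mem_trainsAt {i : I} {n : N} : i ∈ trainsAt p k n ↔ p i (k i) = n := by
  simp only [trainsAt, Finset.mem_filter_univ]

lemma trainsAt_subset_trainsAt_last {n : N}
    (hn : ∀ i ∈ trainsAt p k n, k i = Fin.last (L i)) :
    trainsAt p k n ⊆ trainsAt p (fun i => Fin.last (L i)) n := by
  intro i hi
  rw [mem_trainsAt, ← hn i hi]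
  exact mem_trainsAt.1 hi

variable [DecidableEq I]

lemma Move.lt (h : Move c L p k k') : k < k' := by
  obtain ⟨i, _, hi, hne, _⟩ := h
  have hlt : k i < k' i := by
    rw [hi, Fin.lt_def]
    exact Nat.lt_succ_self _
  refine Pi.lt_def.2 ⟨fun j => ?_, i, hlt⟩
  obtain rfl | hj := eq_or_ne j i
  · exact hlt.le
  · exact (hne j hj).ge

/-- Every node has a free slot once train `j` is disregarded. Unlike `SafeConfig`, this allows the
node occupied by `j` to be full, and it is preserved when `j` moves. -/
def SafeExcept (c : N → ℕ) (L : I → ℕ) (p : ∀ i : I, Fin (L i + 1) → N)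
    (k : ∀ i : I, Fin (L i + 1)) (j : I) : Prop :=
  ∀ n : N, ((trainsAt p k n).erase j).card < c n

lemma SafeConfig.safeExcept (h : SafeConfig c L p k) (j : I) : SafeExcept c L p k j :=
  fun n => Finset.card_erase_le.trans_lt (h n)

namespace SafeExcept

variable {i j : I}

lemma update (h : SafeExcept c L p k j) (x : Fin (L j + 1)) :
    SafeExcept c L p (Function.update k j x) j := by
  intro n
  have heq : (trainsAt p (Function.update k j x) n).erase j = (trainsAt p k n).erase j := by
    ext i
    simp only [Finset.mem_erase, mem_trainsAt]
    exact and_congr_right fun hi => by rw [Function.update_of_ne hi]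
  exact heq ▸ h n

lemma move (h : SafeExcept c L p k j) (hj : (k j : ℕ) < L j) :
    Move c L p k (Function.update k j ⟨k j + 1, Nat.succ_lt_succ hj⟩) := by
  refine ⟨j, hj, Function.update_self .., fun i hi => Function.update_of_ne hi .., ?_⟩
  convert h _ using 2
  ext i
  simp only [Finset.mem_filter_univ, Finset.mem_erase, mem_trainsAt]

lemma of_same_node (h : SafeExcept c L p k i) (hij : p i (k i) = p j (k j)) :
    SafeExcept c L p k j := by
  intro n
  have hcard := h n
  simp only [Finset.card_erase_eq_ite, mem_trainsAt, hij] at hcard ⊢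
  exact hcard

lemma safeConfig (h : SafeExcept c L p k j)
    (hj : (trainsAt p k (p j (k j))).card < c (p j (k j))) : SafeConfig c L p k := by
  intro n
  obtain rfl | hn := eq_or_ne (p j (k j)) n
  · exact hj
  · have herase : (trainsAt p k n).erase j = trainsAt p k n :=
      Finset.erase_eq_of_notMem (mt mem_trainsAt.1 hn)
    exact (congrArg Finset.card herase).symm.trans_lt (h n)

lemma exists_unfinished (hterm : SafeConfig c L p fun i => Fin.last (L i))
    (h : SafeExcept c L p k j) (hk : k ≠ fun i => Fin.last (L i)) :
    ∃ i, k i ≠ Fin.last (L i) ∧ SafeExcept c L p k i := by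
  by_cases hfin : ∀ i ∈ trainsAt p k (p j (k j)), k i = Fin.last (L i)
  · have hsafe : SafeConfig c L p k :=
      h.safeConfig ((Finset.card_le_card (trainsAt_subset_trainsAt_last hfin)).trans_lt (hterm _))
    obtain ⟨i, hi⟩ := Function.ne_iff.1 hk
    exact ⟨i, hi, hsafe.safeExcept i⟩
  · push Not at hfin
    obtain ⟨i, hij, hi⟩ := hfin
    exact ⟨i, hi, h.of_same_node (mem_trainsAt.1 hij).symm⟩

lemma exists_move (hterm : SafeConfig c L p fun i => Fin.last (L i))
    (h : SafeExcept c L p k j) (hk : k ≠ fun i => Fin.last (L i)) :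
    ∃ k' i, Move c L p k k' ∧ SafeExcept c L p k' i := by
  obtain ⟨i, hi, hsafe⟩ := h.exists_unfinished hterm hk
  exact ⟨_, i, hsafe.move (Fin.val_lt_last hi), hsafe.update _⟩

lemma reachable_last (hterm : SafeConfig c L p fun i => Fin.last (L i))
    (h : SafeExcept c L p k j) : Reachable c L p k fun i => Fin.last (L i) := by
  induction k using WellFoundedGT.induction generalizing j with
  | _ k ih =>
    by_cases hk : k = fun i => Fin.last (L i)
    · exact hk ▸ Relation.ReflTransGen.refl
    · obtain ⟨k', i, hmove, hsafe⟩ := h.exists_move hterm hk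
      exact (ih k' hmove.lt hsafe).head hmove

end SafeExcept

theorem recursive_feasibility_general (hterm : SafeConfig c L p fun i => Fin.last (L i))
    {s : ∀ i : I, Fin (L i + 1)} {j : I} (hs : SafeExcept c L p s j)
    (hreach : Reachable c L p k s) : Reachable c L p k fun i => Fin.last (L i) :=
  hreach.trans (hs.reachable_last hterm)

end

/-- recursive feasibility: under the terminal capacity condition,
if a safe configuration `s` is reachable from `k₀`, then from every intermediate
configuration `k'` (reachable from `k₀` and from which `s` is reachable) the
terminal configuration is reachable. -/
theorem recursive_feasibility
    {I N : Type*} [Fintype I] [DecidableEq I] [DecidableEq N]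
    (c : N → ℕ) (L : I → ℕ) (p : ∀ i : I, Fin (L i + 1) → N)
    (hterm : ∀ n : N,
      (Finset.univ.filter (fun i : I => p i (Fin.last (L i)) = n)).card < c n)
    (k₀ s : ∀ i : I, Fin (L i + 1))
    (hs : SafeConfig c L p s) (hreach : Reachable c L p k₀ s) :
    ∀ k' : ∀ i : I, Fin (L i + 1),
      Reachable c L p k₀ k' → Reachable c L p k' s →
        Reachable c L p k' (fun i => Fin.last (L i)) := by
  intro k' _ hk's
  by_cases hlast : s = fun i => Fin.last (L i)
  · exact hlast ▸ hk's
  · obtain ⟨j, _⟩ := Function.ne_iff.1 hlast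
    exact recursive_feasibility_general hterm (hs.safeExcept j) hk's
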